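/- Let G = (V,E) be a finite simple non-empty graph of order n whose set I_G of isolated vertices (vertices of degree 0) is nonempty, and let S = V ∖ I_G. Then G satisfies (k,1)-adjacency anonymity with k = min{δ(⟨S⟩_G), n − Δ(G) − 1}, where ⟨S⟩_G is the subgraph of G induced by S, δ(⟨S⟩_G) is its minimum degree, and Δ(G) is the maximum degree of G. -/

import Mathlib

open Finset

variable {V : Type*}

/-- The adjacency function: 0 if equal, 1 if adjacent, 2 otherwise. -/
def adjFn [DecidableEq V] (G : SimpleGraph V) [DecidableRel G.Adj] (u v : V) : ℕ :=
  if u = v then 0 else if G.Adj u v then 1 else 2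

/-- The equivalence class of `x` outside `S` under equality of adjacency
representations with respect to `S`. -/
def adjClass [DecidableEq V] (G : SimpleGraph V) [DecidableRel G.Adj] (S : Set V) (x : V) :
    Set V :=
  {y | y ∉ S ∧ ∀ s ∈ S, adjFn G s x = adjFn G s y}

/-- `S` is a `k`-adjacency antiresolving set of `G`: `S` is a proper nonempty subset of the
vertex set and `k` is the minimum cardinality of an equivalence class of the relation
"having equal adjacency representation with respect to `S`" on the complement of `S`. -/
def IsAdjAntiresolvingSet [DecidableEq V] (G : SimpleGraph V) [DecidableRel G.Adj]
    (S : Set V) (k : ℕ) : Prop :=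
  S.Nonempty ∧ S ≠ Set.univ ∧ 0 < k ∧
    (∀ x ∉ S, k ≤ (adjClass G S x).ncard) ∧
    (∃ x ∉ S, (adjClass G S x).ncard = k)

/-- `G` satisfies `(k,ℓ)`-adjacency anonymity: `k` is the smallest positive integer such that
the `k`-adjacency antidimension of `G` (minimum cardinality of a `k`-adjacency antiresolving
set) is at most `ℓ`. -/
def AdjAnonymous [DecidableEq V] (G : SimpleGraph V) [DecidableRel G.Adj] (k ℓ : ℕ) : Prop :=
  0 < k ∧ (∃ S : Set V, IsAdjAntiresolvingSet G S k ∧ S.ncard ≤ ℓ) ∧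
    ∀ k' : ℕ, 0 < k' → (∃ S : Set V, IsAdjAntiresolvingSet G S k' ∧ S.ncard ≤ ℓ) → k ≤ k'

/-!
A singleton `{s}` divides the other vertices into at most two classes, the neighbours of `s` in `G`
and its neighbours in `Gᶜ`. The class sizes arising from singletons are therefore exactly the
nonzero degrees of `G` and of `Gᶜ`, and the anonymity parameter for `ℓ = 1` is the least of them.
If no vertex is universal, every degree of `Gᶜ` is nonzero and the least one is `n - Δ(G) - 1`.
-/

section Singleton

variable [DecidableEq V] {G : SimpleGraph V} [DecidableRel G.Adj]

lemma mem_adjClass_self {S : Set V} {x : V} (hx : x ∉ S) : x ∈ adjClass G S x :=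
  ⟨hx, fun _ _ => rfl⟩

lemma adjClass_singleton_of_adj {s x : V} (h : G.Adj s x) :
    adjClass G {s} x = G.neighborSet s := by
  ext y
  simp only [adjClass, adjFn, Set.mem_singleton_iff, Set.mem_ofPred_eq, forall_eq,
    SimpleGraph.mem_neighborSet]
  grind [h.ne, G.irrefl]

lemma adjClass_singleton_of_compl_adj {s x : V} (h : Gᶜ.Adj s x) :
    adjClass G {s} x = Gᶜ.neighborSet s := by
  rw [SimpleGraph.compl_adj] at h
  ext y
  simp only [adjClass, adjFn, Set.mem_singleton_iff, Set.mem_ofPred_eq, forall_eq,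
    SimpleGraph.mem_neighborSet, SimpleGraph.compl_adj]
  grind

/-- The cardinalities of the classes into which a single vertex `s` divides the remaining
vertices. As singletons are the only candidates for `ℓ = 1`, the least of these numbers decides
`(k, 1)`-adjacency anonymity. -/
def singletonClassSizes (G : SimpleGraph V) [DecidableRel G.Adj] : Set ℕ :=
  {m | ∃ s x : V, s ≠ x ∧ (adjClass G {s} x).ncard = m}

lemma ncard_adjClass_mem_singletonClassSizes {s x : V} (hx : x ∉ ({s} : Set V)) :
    (adjClass G {s} x).ncard ∈ singletonClassSizes G :=
  ⟨s, x, Ne.symm hx, rfl⟩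

theorem exists_isAdjAntiresolvingSet_singleton [Finite V] {k : ℕ}
    (hk : IsLeast (singletonClassSizes G) k) : ∃ s : V, IsAdjAntiresolvingSet G {s} k := by
  obtain ⟨⟨s, x, hsx, rfl⟩, hmin⟩ := hk
  have hx : x ∉ ({s} : Set V) := hsx.symm
  exact ⟨s, Set.singleton_nonempty s, (Set.ne_univ_iff_exists_notMem _).2 ⟨x, hx⟩,
    (Set.ncard_pos).2 ⟨x, mem_adjClass_self hx⟩,
    fun _ hy => hmin (ncard_adjClass_mem_singletonClassSizes hy), x, hx, rfl⟩

lemma IsAdjAntiresolvingSet.mem_singletonClassSizes [Finite V] {T : Set V} {k : ℕ}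
    (hT : IsAdjAntiresolvingSet G T k) (hcard : T.ncard ≤ 1) : k ∈ singletonClassSizes G := by
  obtain ⟨hne, -, -, -, x, hx, rfl⟩ := hT
  obtain ⟨s, rfl⟩ := Set.ncard_eq_one.1 (hcard.antisymm ((Set.ncard_pos).2 hne))
  exact ncard_adjClass_mem_singletonClassSizes hx

theorem adjAnonymous_one_of_isLeast [Finite V] {k : ℕ}
    (hk : IsLeast (singletonClassSizes G) k) : AdjAnonymous G k 1 := by
  obtain ⟨s, hs⟩ := exists_isAdjAntiresolvingSet_singleton hk
  refine ⟨hs.2.2.1, ⟨{s}, hs, (Set.ncard_singleton s).le⟩, ?_⟩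
  rintro k' - ⟨T, hT, hcard⟩
  exact hk.2 (hT.mem_singletonClassSizes hcard)

end Singleton

section Degree

variable {G : SimpleGraph V}

lemma ncard_neighborSet_eq_degree (v : V) [Fintype (G.neighborSet v)] :
    (G.neighborSet v).ncard = G.degree v := by
  rw [← Nat.card_coe_set_eq, Nat.card_eq_fintype_card, SimpleGraph.card_neighborSet_eq_degree]

lemma card_filter_adj_eq_degree [DecidableRel G.Adj] {S : Finset V} (hS : G.support ⊆ S)
    (v : V) [Fintype (G.neighborSet v)] : (S.filter fun w => G.Adj v w).card = G.degree v := by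
  rw [← SimpleGraph.card_neighborFinset_eq_degree]
  congr 1
  ext w
  simpa using fun h : G.Adj v w => hS h.right_mem_support

variable [Fintype V] [DecidableRel G.Adj]

lemma isLeast_range_degree [Nonempty V] : IsLeast (Set.range fun v => G.degree v) G.minDegree := by
  obtain ⟨v, hv⟩ := G.exists_minimal_degree_vertex
  exact ⟨⟨v, hv.symm⟩, Set.forall_mem_range.2 G.minDegree_le_degree⟩

variable [DecidableEq V]

lemma minDegree_compl [Nonempty V] : Gᶜ.minDegree = Fintype.card V - G.maxDegree - 1 := by
  obtain ⟨v, hv⟩ := G.exists_maximal_degree_vertex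
  apply le_antisymm
  · have := Gᶜ.minDegree_le_degree v
    rw [G.degree_compl] at this
    omega
  · refine Gᶜ.le_minDegree_of_forall_le_degree _ fun w => ?_
    have := G.degree_le_maxDegree w
    rw [G.degree_compl]
    omega

theorem singletonClassSizes_eq_degree_union_degree_compl :
    singletonClassSizes G =
      (fun v => G.degree v) '' G.support ∪ (fun v => Gᶜ.degree v) '' Gᶜ.support := by
  ext m
  constructor
  · rintro ⟨s, x, hsx, rfl⟩
    by_cases h : G.Adj s x
    · left
      exact ⟨s, h.left_mem_support, by
        rw [adjClass_singleton_of_adj h, ncard_neighborSet_eq_degree]⟩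
    · right
      have h' : Gᶜ.Adj s x := ⟨hsx, h⟩
      exact ⟨s, h'.left_mem_support, by
        rw [adjClass_singleton_of_compl_adj h', ncard_neighborSet_eq_degree]⟩
  · rintro (⟨s, ⟨x, h : G.Adj s x⟩, rfl⟩ | ⟨s, ⟨x, h : Gᶜ.Adj s x⟩, rfl⟩)
    · exact ⟨s, x, h.ne, by rw [adjClass_singleton_of_adj h, ncard_neighborSet_eq_degree]⟩
    · exact ⟨s, x, h.ne, by rw [adjClass_singleton_of_compl_adj h, ncard_neighborSet_eq_degree]⟩

end Degree

theorem stmt3_general [Fintype V] [DecidableEq V] (G : SimpleGraph V) [DecidableRel G.Adj]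
    (hnonempty : ∃ u v : V, G.Adj u v) (huniv : ∀ v : V, ¬ G.IsUniversal v)
    (S : Finset V) (hS : S = Finset.univ.filter fun v => G.degree v ≠ 0) :
    AdjAnonymous G
      (min (sInf ((fun v => (S.filter fun w => G.Adj v w).card) '' (S : Set V)))
        (Fintype.card V - G.maxDegree - 1)) 1 := by
  obtain ⟨u, v, huv⟩ := hnonempty
  have : Nonempty V := ⟨u⟩
  have hsupp : (S : Set V) = G.support := by
    ext w
    simp [hS, ← SimpleGraph.degree_pos_iff_mem_support, Nat.pos_iff_ne_zero]
  have hsupp_compl : Gᶜ.support = Set.univ := Set.eq_univ_of_forall fun w => by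
    simpa [SimpleGraph.mem_support_iff_not_isIsolated] using huniv w
  have hleast : IsLeast ((fun w => G.degree w) '' G.support)
      (sInf ((fun w => G.degree w) '' G.support)) :=
    isLeast_csInf ⟨_, u, huv.left_mem_support, rfl⟩
  have hleast_compl : IsLeast ((fun w => Gᶜ.degree w) '' Gᶜ.support) Gᶜ.minDegree := by
    rw [hsupp_compl, Set.image_univ]
    exact isLeast_range_degree
  simp only [card_filter_adj_eq_degree hsupp.ge, hsupp, ← minDegree_compl]
  apply adjAnonymous_one_of_isLeast
  rw [singletonClassSizes_eq_degree_union_degree_compl]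
  exact hleast.union hleast_compl

/-- a finite simple non-empty graph `G` of order `n` with a nonempty set of
isolated vertices satisfies `(k,1)`-adjacency anonymity with
`k = min {δ(⟨S⟩_G), n - Δ(G) - 1}`, where `S` is the set of non-isolated vertices. -/
theorem stmt3 [Fintype V] [DecidableEq V] [Nonempty V] (G : SimpleGraph V) [DecidableRel G.Adj]
    (hnonempty : ∃ u v : V, G.Adj u v)
    (hiso : ∃ v : V, G.degree v = 0)
    (S : Finset V) (hS : S = Finset.univ.filter fun v => G.degree v ≠ 0) :
    AdjAnonymous G
      (min (sInf ((fun v => (S.filter fun w => G.Adj v w).card) '' (S : Set V)))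
        (Fintype.card V - G.maxDegree - 1)) 1 := by
  obtain ⟨i, hi⟩ := hiso
  have : Nontrivial V := let ⟨_, _, h⟩ := hnonempty; h.nontrivial
  exact stmt3_general G hnonempty ((G.degree_eq_zero i).1 hi).not_isUniversal S hS
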